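/- arXiv:1212.4532 — 3 statements merged into one kernel-verified Lean document; each statement's English description precedes it below -/
import Mathlib

section
/- Let D be a division ring with center F that is finite-dimensional over F, and let N be a normal subgroup of D^*. If every element of N has some positive power lying in F, then N ⊆ F. -/
/-!
The proof compares norms of commutators. Let `F = Z(D)`, let `a ∈ N`, and suppose `b` does not
commute with `a`. For `x ≠ 0` the commutator `u = a x a⁻¹ x⁻¹` lies in `N`, so a power of it is in
`F`; since its norm over `F` is `1`, it is even a root of unity
(`exists_pow_eq_one_of_norm_eq_one`). Hence `u - 1` is integral over `ℤ`, and so is its norm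
(`isIntegral_norm_of_ring`).

Take `x = t - b` with `t ∈ F`. Then `(u - 1) x = a x a⁻¹ - x = b - a b a⁻¹ =: e` is nonzero and does
not depend on `t`. Taking norms, the nonzero constant `norm e` is `r(t) f(t)`, where
`f(t) = norm (t - b)` is a monic polynomial in `t` of positive degree and `r(t)` is integral
over `ℤ`.

* This forces `F` to be algebraic over its prime field `k` (`isAlgebraic_of_eval_mul`): up to a
  fixed scalar, `f` takes all its values in the algebraic closure `F₀` of `k` in `F`. If `F` is
  infinite then so is `F₀`, and interpolation at points of `F₀` puts `f` in `F₀[X]`; then every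
  `t ∈ F` is a root of a nonzero polynomial over `F₀`.
* Consequently finitely many elements of `D` lie in a `k`-subalgebra `D₀` of finite dimension over
  `k` (`exists_finite_subalgebra`).
* In characteristic `p`, `D₀` is finite, hence commutative by Wedderburn's little theorem, although
  it contains `a` and `b`.
* In characteristic `0`, the same norm identity for `D₀` over `ℚ` has `r(t) ∈ ℤ \ {0}` for `t ∈ ℕ`,
  so `|f(t)| ≤ |norm e|` for all `t ∈ ℕ`, although `f` is a nonconstant polynomial over `ℚ`.
-/

open Polynomial

/-! ### Norms in noncommutative algebras -/

/-- Norms of integral elements are integral, for a possibly noncommutative algebra `S`. Every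
root of the characteristic polynomial of left multiplication by `x` is a root of any polynomial
killing `x`, hence integral, and the norm is the product of these roots. -/
lemma isIntegral_norm_of_ring {F S : Type*} [Field F] [Ring S] [Algebra F S] [Module.Finite F S]
    {x : S} (hx : IsIntegral ℤ x) : IsIntegral ℤ (Algebra.norm F x) := by
  classical
  obtain ⟨p, hp, hpx⟩ := hx
  let b := Module.finBasis F S
  let K := AlgebraicClosure F
  let φ : S →+* Matrix _ _ K :=
    ((algebraMap F K).mapMatrix).comp (Algebra.leftMulMatrix b : S →ₐ[F] _).toRingHom
  have hdet : algebraMap F K (Algebra.norm F x) = (φ x).det := by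
    rw [Algebra.norm_eq_matrix_det b, RingHom.map_det]
    rfl
  have hφ : aeval (φ x) (p.map (algebraMap ℤ K)) = 0 := by
    rw [aeval_map_algebraMap, aeval_def]
    have := congrArg φ hpx
    rw [hom_eval₂, map_zero] at this
    rw [← this]
    congr 1
    exact RingHom.ext_int _ _
  rw [← isIntegral_algebraMap_iff (algebraMap F K).injective, hdet,
    Matrix.det_eq_prod_roots_charpoly]
  refine IsIntegral.multiset_prod fun μ hμ => ?_
  have hroot := Polynomial.isRoot_of_mem_roots hμ
  rw [← Matrix.mem_spectrum_iff_isRoot_charpoly] at hroot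
  have h0 := spectrum.subset_polynomial_aeval (φ x) (p.map (algebraMap ℤ K)) ⟨μ, hroot, rfl⟩
  rw [hφ] at h0
  refine ⟨p, hp, ?_⟩
  rw [← eval_map]
  by_contra hne
  rw [spectrum.mem_iff, sub_zero] at h0
  exact h0 ((IsUnit.mk0 _ hne).map (algebraMap K _))

/-- The norm of `t - b`, as a function of `t`, is a monic polynomial. -/
lemma exists_norm_poly (F : Type*) {S : Type*} [Field F] [Ring S] [Nontrivial S] [Algebra F S]
    [Module.Finite F S] (b : S) : ∃ f : F[X], f.Monic ∧ 0 < f.natDegree ∧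
      ∀ t : F, f.eval t = Algebra.norm F (algebraMap F S t - b) := by
  refine ⟨(Algebra.lmul F S b).charpoly, LinearMap.charpoly_monic _, ?_, fun t => ?_⟩
  · rw [LinearMap.charpoly_natDegree]
    exact Module.finrank_pos
  · rw [LinearMap.eval_charpoly, Algebra.norm_apply, map_sub (Algebra.lmul F S),
      AlgHom.commutes]

/-- An element of norm one with a power in the base field has finite order: the power `c`
satisfies `c ^ [D : F] = 1`. -/
lemma exists_pow_eq_one_of_norm_eq_one {F D : Type*} [Field F] [Ring D] [Nontrivial D]
    [Algebra F D] [Module.Finite F D] {u : D} (hu : Algebra.norm F u = 1) {n : ℕ} (hn : 0 < n)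
    {c : F} (hc : u ^ n = algebraMap F D c) : ∃ m, 0 < m ∧ u ^ m = 1 := by
  refine ⟨n * Module.finrank F D, Nat.mul_pos hn Module.finrank_pos, ?_⟩
  have h := congrArg (Algebra.norm F) hc
  rw [map_pow, hu, one_pow, Algebra.norm_algebraMap] at h
  rw [pow_mul, hc, ← map_pow, ← h, map_one]

lemma isIntegral_sub_one_of_pow {S : Type*} [Ring S] {u : S} {m : ℕ} (hm : 0 < m)
    (hu : u ^ m = 1) : IsIntegral ℤ (u - 1) := by
  have h : IsIntegral ℤ u := ⟨X ^ m - 1, monic_X_pow_sub_C 1 hm.ne', by simp [hu]⟩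
  -- `IsIntegral.sub` is only available in commutative rings, so shift the polynomial instead.
  obtain ⟨p, hp, hpu⟩ := h
  refine ⟨p.comp (X + C 1), hp.comp (monic_X_add_C 1) (by rw [natDegree_X_add_C]; exact one_ne_zero), ?_⟩
  rw [← aeval_def] at hpu ⊢
  rw [aeval_comp]
  simpa using hpu

/-! ### Polynomials whose values divide a constant -/

/-- If a nonzero constant is divisible, with quotients integral over `ℤ`, by all values of a
nonconstant monic polynomial `f` over an infinite field `F`, then `F` is algebraic over any
field `k` acting on it. -/
lemma isAlgebraic_of_eval_mul (k : Type*) {F : Type*} [Field k] [Field F] [Algebra k F]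
    [Infinite F] {f : F[X]} (hf : f.Monic) (hdeg : 0 < f.natDegree) {κ : F} (hκ : κ ≠ 0)
    (h : ∀ t : F, ∃ r : F, IsIntegral ℤ r ∧ κ = r * f.eval t) : Algebra.IsAlgebraic k F := by
  classical
  let F₀ := algebraicClosure k F
  have hval : ∀ t : F, ∃ s : F₀, f.eval t = κ * s := by
    intro t
    obtain ⟨r, hr, hrt⟩ := h t
    have hr0 : r ≠ 0 := by
      rintro rfl
      exact hκ (by simpa using hrt)
    have hrF : r ∈ F₀ := mem_algebraicClosure_iff'.mpr hr.tower_top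
    refine ⟨⟨r⁻¹, inv_mem hrF⟩, ?_⟩
    rw [hrt]
    field_simp
  choose s hs using hval
  have hinf : Infinite F₀ := by
    by_contra hfin
    rw [not_infinite_iff_finite] at hfin
    -- Otherwise some fibre of `f` is infinite.
    have hpre : (s ⁻¹' Set.univ).Finite := by
      refine Set.Finite.preimage' Set.finite_univ fun y _ => ?_
      have hne : f - C (κ * (y : F)) ≠ 0 := by
        intro h0
        rw [sub_eq_zero] at h0
        rw [h0, natDegree_C] at hdeg
        exact lt_irrefl _ hdeg
      refine (finite_setOfPred_isRoot hne).subset fun t ht => ?_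
      have : s t = y := ht
      simp [IsRoot, hs, this]
    exact Set.infinite_univ hpre
  obtain ⟨T, hT⟩ := Infinite.exists_subset_card_eq F₀ (f.natDegree + 1)
  let g : F₀[X] := Lagrange.interpolate T id fun v => s (v : F)
  have hgdeg : g.degree < T.card :=
    Lagrange.degree_interpolate_lt _ (Function.injective_id.injOn)
  have hfg : f = C κ * g.map (algebraMap F₀ F) := by
    refine eq_of_degrees_lt_of_eval_index_eq (v := fun v : F₀ => (v : F)) T
      (Subtype.val_injective.injOn) ?_ ?_ ?_
    · rw [hT, degree_eq_natDegree hf.ne_zero]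
      exact_mod_cast Nat.lt_succ_self _
    · rw [degree_C_mul hκ, degree_map]
      exact hgdeg
    · intro v hv
      have h1 : g.eval v = s (v : F) :=
        Lagrange.eval_interpolate_at_node _ (Function.injective_id.injOn) hv
      have h2 : (g.map (algebraMap F₀ F)).eval (v : F) = (s (v : F) : F) := by
        rw [← h1]
        exact eval_map_apply (f := algebraMap F₀ F) v
      rw [hs, eval_mul, eval_C, h2]
  have hκ₀ : κ * (g.leadingCoeff : F) = 1 := by
    have := hf.leadingCoeff
    rw [hfg, leadingCoeff_mul, leadingCoeff_C, leadingCoeff_map] at this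
    exact this
  have hg0 : g ≠ 0 := by
    intro h0
    rw [hfg, h0] at hdeg
    simp at hdeg
  have hgpos : 0 < g.natDegree := by
    rwa [hfg, natDegree_C_mul hκ, natDegree_map] at hdeg
  refine ⟨fun t => ?_⟩
  -- `κ = (lc g)⁻¹` lies in `F₀`, so `f(t) = κ * s t` exhibits `t` as a root of `g - s t` over `F₀`.
  have hgt : aeval t g = (s t : F) := by
    have := hs t
    rw [hfg, eval_mul, eval_C] at this
    rw [aeval_def, ← eval_map]
    exact mul_left_cancel₀ hκ this
  have hne : g - C (s t) ≠ 0 := by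
    intro h0
    rw [sub_eq_zero] at h0
    rw [h0, natDegree_C] at hgpos
    exact lt_irrefl _ hgpos
  have halg : IsAlgebraic F₀ t := ⟨g - C (s t), hne, by
    rw [map_sub, hgt, aeval_C]
    exact sub_self _⟩
  exact halg.restrictScalars k

/-- A nonconstant polynomial over `ℚ` is unbounded on `ℕ`, so its values cannot all divide a fixed
nonzero rational with integer quotients. -/
lemma not_forall_eval_mul_rat {f : ℚ[X]} (hf : f.Monic) (hdeg : 0 < f.natDegree) {κ : ℚ}
    (hκ : κ ≠ 0) : ¬ ∀ t : ℚ, ∃ r : ℚ, IsIntegral ℤ r ∧ κ = r * f.eval t := by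
  intro h
  have htend := (f.tendsto_atTop_of_leadingCoeff_nonneg (natDegree_pos_iff_degree_pos.mp hdeg)
    (by rw [hf.leadingCoeff]; exact zero_le_one)).comp (tendsto_natCast_atTop_atTop (R := ℚ))
  obtain ⟨t, ht⟩ := (htend.eventually_gt_atTop |κ|).exists
  obtain ⟨r, hr, hrt⟩ := h t
  obtain ⟨z, rfl⟩ := IsIntegrallyClosed.isIntegral_iff.mp hr
  have hz : z ≠ 0 := by
    rintro rfl
    exact hκ (by simpa using hrt)
  have hz1 : (1 : ℚ) ≤ |(z : ℚ)| := by exact_mod_cast Int.one_le_abs hz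
  have habs : |κ| = |(z : ℚ)| * |f.eval (t : ℚ)| := by
    rw [← abs_mul, hrt]
    rfl
  have h2 : |κ| < |f.eval (t : ℚ)| := lt_of_lt_of_le ht (le_abs_self _)
  nlinarith [abs_nonneg (f.eval (t : ℚ))]

/-! ### Finite-dimensional subalgebras -/

/-- A finite-dimensional algebra over an algebraic extension `F` of `k` is locally finite over `k`:
the finitely many matrix entries of given elements generate a finite extension of `k`. -/
lemma exists_finite_subalgebra (k F : Type*) {D : Type*} [Field k] [Field F] [Ring D]
    [Algebra k F] [Algebra F D] [Algebra k D] [IsScalarTower k F D] [Module.Finite F D]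
    [Algebra.IsAlgebraic k F] (a b : D) :
    ∃ A : Subalgebra k D, Module.Finite k A ∧ a ∈ A ∧ b ∈ A := by
  classical
  let B := Module.finBasis F D
  let M := (Algebra.leftMulMatrix B).restrictScalars k
  have hM : Function.Injective M := Algebra.leftMulMatrix_injective B
  let E : Set F := Set.range (fun ij : _ × _ => M a ij.1 ij.2) ∪
    Set.range (fun ij : _ × _ => M b ij.1 ij.2)
  have : Finite E := (Set.finite_range _).union (Set.finite_range _)
  let K := IntermediateField.adjoin k E
  have : FiniteDimensional k K := IntermediateField.finiteDimensional_adjoin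
    fun x _ => Algebra.IsIntegral.isIntegral x
  let ι : Matrix (Fin (Module.finrank F D)) (Fin (Module.finrank F D)) K →ₐ[k]
      Matrix (Fin (Module.finrank F D)) (Fin (Module.finrank F D)) F := K.val.mapMatrix
  refine ⟨ι.range.comap M, ?_, ?_, ?_⟩
  · let ψ : (ι.range.comap M) →ₗ[k] ι.range :=
      (M.toLinearMap.restrict (p := Subalgebra.toSubmodule (ι.range.comap M))
        (q := Subalgebra.toSubmodule ι.range) fun x hx => hx)
    have hfin : Module.Finite k ι.range := Module.Finite.range ι.toLinearMap
    refine Module.Finite.of_injective ψ fun x y hxy => ?_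
    exact Subtype.ext (hM (congrArg Subtype.val hxy))
  · refine ⟨fun i j => ⟨M a i j, IntermediateField.subset_adjoin k E (Or.inl ⟨(i, j), rfl⟩)⟩, ?_⟩
    rfl
  · refine ⟨fun i j => ⟨M b i j, IntermediateField.subset_adjoin k E (Or.inr ⟨(i, j), rfl⟩)⟩, ?_⟩
    rfl

/-- Finite-dimensional subalgebras of a division ring are closed under inverses. -/
lemma inv_mem_of_finite {k D : Type*} [Field k] [DivisionRing D] [Algebra k D]
    (A : Subalgebra k D) [Module.Finite k A] {x : D} (hx : x ∈ A) : x⁻¹ ∈ A := by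
  rcases eq_or_ne x 0 with rfl | hx0
  · simp
  have hinj : Function.Injective (LinearMap.mulLeft k (⟨x, hx⟩ : A)) := by
    intro y z hyz
    exact Subtype.ext (mul_left_cancel₀ hx0 (congrArg Subtype.val hyz))
  obtain ⟨y, hy⟩ := LinearMap.surjective_of_injective hinj 1
  have hxy : x * (y : D) = 1 := congrArg Subtype.val hy
  rw [inv_eq_of_mul_eq_one_right hxy]
  exact y.2

/-! ### Norms of commutators -/

/-- The norm identity: with `u = a (t - b) a⁻¹ (t - b)⁻¹`, the element
`(u - 1) (t - b) = b - a b a⁻¹` does not depend on `t`. It is stated for a subalgebra `A` of a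
division ring so that it applies both to `D` over its center and to subalgebras over `ℚ`. -/
lemma exists_poly_of_torsion {F D : Type*} [Field F] [DivisionRing D] [Algebra F D]
    (A : Subalgebra F D) [Module.Finite F A] {a b : D} (ha : a ∈ A) (hb : b ∈ A)
    (ha0 : a ≠ 0) (hab : a * b ≠ b * a)
    (htor : ∀ x : D, x ≠ 0 → ∃ m, 0 < m ∧ (a * x * a⁻¹ * x⁻¹) ^ m = 1) :
    ∃ (f : F[X]) (κ : F), f.Monic ∧ 0 < f.natDegree ∧ κ ≠ 0 ∧
      ∀ t : F, ∃ r : F, IsIntegral ℤ r ∧ κ = r * f.eval t := by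
  obtain ⟨f, hf, hdeg, heval⟩ := exists_norm_poly F (⟨b, hb⟩ : A)
  have ha' := inv_mem_of_finite A ha
  let e : A := ⟨b - a * b * a⁻¹, A.sub_mem hb (A.mul_mem (A.mul_mem ha hb) ha')⟩
  have he : e ≠ 0 := by
    intro h0
    have h1 : b - a * b * a⁻¹ = 0 := congrArg Subtype.val h0
    rw [sub_eq_zero, eq_mul_inv_iff_mul_eq₀ ha0] at h1
    exact hab h1.symm
  refine ⟨f, Algebra.norm F e, hf, hdeg, Algebra.norm_ne_zero_iff.mpr he, fun t => ?_⟩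
  have hcomm : a * algebraMap F D t = algebraMap F D t * a := (Algebra.commutes t a).symm
  have hx0 : algebraMap F D t - b ≠ 0 := by
    intro h0
    rw [sub_eq_zero] at h0
    exact hab (h0 ▸ hcomm)
  let x : A := ⟨algebraMap F D t - b, A.sub_mem (A.algebraMap_mem t) hb⟩
  let u : A := ⟨a * (algebraMap F D t - b) * a⁻¹ * (algebraMap F D t - b)⁻¹,
    A.mul_mem (A.mul_mem (A.mul_mem ha x.2) ha') (inv_mem_of_finite A x.2)⟩
  obtain ⟨m, hm, hum⟩ := htor _ hx0
  have hu : u ^ m = 1 := Subtype.ext hum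
  refine ⟨Algebra.norm F (u - 1), isIntegral_norm_of_ring (isIntegral_sub_one_of_pow hm hu), ?_⟩
  have hx : algebraMap F A t - ⟨b, hb⟩ = x := rfl
  rw [heval, hx, ← map_mul]
  congr 1
  apply Subtype.ext
  change b - a * b * a⁻¹ = (a * (algebraMap F D t - b) * a⁻¹ * (algebraMap F D t - b)⁻¹ - 1) *
    (algebraMap F D t - b)
  rw [sub_mul, inv_mul_cancel_right₀ hx0, mul_sub, hcomm, sub_mul, mul_inv_cancel_right₀ ha0,
    one_mul]
  abel

/-- In a centrally finite division ring, an element all of whose multiplicative commutators have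
finite order is central. -/
lemma commute_of_torsion {D : Type*} [DivisionRing D] [Module.Finite (Subring.center D) D]
    {a b : D} (ha0 : a ≠ 0)
    (htor : ∀ x : D, x ≠ 0 → ∃ m, 0 < m ∧ (a * x * a⁻¹ * x⁻¹) ^ m = 1) : a * b = b * a := by
  by_contra hab
  let F := Subring.center D
  have halg : ∀ (k : Type) [Field k] [Algebra k F] [Infinite F], Algebra.IsAlgebraic k F := by
    intro k _ _ _
    have : Module.Finite F (⊤ : Subalgebra F D) :=
      Module.Finite.equiv (Subalgebra.topEquiv (R := F) (A := D)).symm.toLinearEquiv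
    obtain ⟨f, κ, hf, hdeg, hκ, h⟩ := exists_poly_of_torsion (⊤ : Subalgebra F D)
      (Algebra.mem_top (x := a)) (Algebra.mem_top (x := b)) ha0 hab htor
    exact isAlgebraic_of_eval_mul k hf hdeg hκ h
  rcases CharP.exists' D with h0 | ⟨p, hp, hchar⟩
  · have := halg ℚ
    obtain ⟨A, hA, haA, hbA⟩ := exists_finite_subalgebra ℚ F a b
    obtain ⟨f, κ, hf, hdeg, hκ, h⟩ := exists_poly_of_torsion A haA hbA ha0 hab htor
    exact not_forall_eval_mul_rat hf hdeg hκ h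
  · let _ : Algebra (ZMod p) D := ZMod.algebra D p
    let _ : Algebra (ZMod p) F := ZMod.algebra F p
    -- The scalar actions are spelled out since `F` carries a second `ZMod p`-action, as a subgroup.
    have : @IsScalarTower (ZMod p) F D Algebra.toSMul Algebra.toSMul Algebra.toSMul :=
      IsScalarTower.of_algebraMap_eq' (Subsingleton.elim _ _)
    have : Algebra.IsAlgebraic (ZMod p) F := by
      rcases finite_or_infinite F with hF | hF
      · exact Algebra.IsAlgebraic.of_finite _ _
      · exact halg (ZMod p)
    obtain ⟨A, hA, haA, hbA⟩ := exists_finite_subalgebra (ZMod p) F a b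
    have : Finite A := Module.finite_of_finite (ZMod p)
    exact hab (congrArg Subtype.val
      ((Finite.isDomain_to_isField A).mul_comm (⟨a, haA⟩ : A) ⟨b, hbA⟩))

/-- Let `D` be a division ring, finite-dimensional over its center `F`, and let `N` be a
normal subgroup of `D^*`. If every element of `N` has some positive power lying in `F`,
then `N ⊆ F`. -/
theorem stmt_6 (D : Type*) [DivisionRing D]
    [Module.Finite (Subring.center D) D]
    (N : Subgroup Dˣ) [N.Normal]
    (hrad : ∀ a ∈ N, ∃ n : ℕ, 0 < n ∧ ((a : Dˣ) : D) ^ n ∈ Subring.center D) :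
    ∀ a ∈ N, ((a : Dˣ) : D) ∈ Subring.center D := by
  intro a ha
  rw [Subring.mem_center_iff]
  intro b
  refine (commute_of_torsion a.ne_zero fun x hx => ?_).symm
  let y : Dˣ := Units.mk0 x hx
  -- `a y a⁻¹ y⁻¹` is the product of `a` and a conjugate of `a⁻¹`.
  have hu : a * y * a⁻¹ * y⁻¹ ∈ N := by
    have := N.mul_mem ha (‹N.Normal›.conj_mem _ (N.inv_mem ha) y)
    simpa only [mul_assoc] using this
  obtain ⟨n, hn, hc⟩ := hrad _ hu
  have hval : ((a * y * a⁻¹ * y⁻¹ : Dˣ) : D) = (a : D) * x * (a : D)⁻¹ * x⁻¹ := by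
    simp [y]
  rw [hval] at hc
  refine exists_pow_eq_one_of_norm_eq_one (F := Subring.center D) ?_ hn (c := ⟨_, hc⟩) rfl
  have hna : Algebra.norm (Subring.center D) (a : D) ≠ 0 :=
    Algebra.norm_ne_zero_iff.mpr a.ne_zero
  have hnx : Algebra.norm (Subring.center D) x ≠ 0 := Algebra.norm_ne_zero_iff.mpr hx
  rw [map_mul, map_mul, map_mul, Algebra.norm_inv, Algebra.norm_inv]
  field_simp
end

section
/- Let D be a centrally finite division ring with center F and N a normal subgroup of D^*. If for all x, y ∈ N there exists a positive integer n with x^n * y = y * x^n, then N ⊆ F. -/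
/-!
The proof has three parts.

*Reduction to torsion commutators.* If `N` is not central, the Cartan–Brauer–Hua argument shows that
the double centralizer of `N` is all of `D`. The span of `N` over the center `F` is finite
dimensional, so for `x ∈ N` a single power `x ^ n` commutes with all of `N`, hence lies in `F`. A
commutator `c = x a x⁻¹ a⁻¹` with `a ∈ N` lies in `N` and has norm `1`; taking norms in
`c ^ n ∈ F` shows that `c` is a root of unity.

*The case where `F` has an element that is not integral over `ℤ`.* Then `F` has a valuation `v` and an
element `π ≠ 0` with `v π < 1` and `v π < v q` for each prime `q` that is nonzero in `F`. The maximum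
of the valuations of the entries of left multiplication matrices is a submultiplicative ultrametric
size on `D`, for which (Minkowski's argument) the only root of unity congruent to `1` modulo `π`
is `1`. For fixed `b` and small `s ∈ F`, the commutator of `1 + s b` and `a` is congruent to `1`
modulo `π`, hence equal to `1`, and so `a` commutes with `b`.

*The case where all of `F` is integral over `ℤ`.* Then `F` is algebraic over a prime field of positive
characteristic, any two elements of `D` lie in a finite subring, and Wedderburn's little theorem
applies.
-/

/-! ### An ultrametric size on a finite-dimensional division algebra -/

open Finset in
/-- The largest valuation of an entry of the matrix of left multiplication by `x` in the basis
`b`: an ultrametric, submultiplicative size function on a finite-dimensional algebra. -/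
noncomputable def matrixSize {K D ι Γ : Type*} [Field K] [Ring D] [Algebra K D] [Fintype ι] [DecidableEq ι]
    [LinearOrderedCommGroupWithZero Γ] (v : Valuation K Γ) (b : Module.Basis ι K D) (x : D) : Γ :=
  univ.sup fun ij : ι × ι => v (Algebra.leftMulMatrix b x ij.1 ij.2)

section Size

variable {K D ι Γ : Type*} [Field K] [DivisionRing D] [Algebra K D] [Fintype ι] [DecidableEq ι]
  [LinearOrderedCommGroupWithZero Γ] (v : Valuation K Γ) (b : Module.Basis ι K D)

lemma matrixSize_le_iff {x : D} {γ : Γ} :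
    matrixSize v b x ≤ γ ↔ ∀ i j, v (Algebra.leftMulMatrix b x i j) ≤ γ := by
  simp [matrixSize, Finset.sup_le_iff]

lemma le_matrixSize (x : D) (i j : ι) :
    v (Algebra.leftMulMatrix b x i j) ≤ matrixSize v b x :=
  (matrixSize_le_iff v b).1 le_rfl i j

lemma matrixSize_add_le {x y : D} {γ : Γ} (hx : matrixSize v b x ≤ γ)
    (hy : matrixSize v b y ≤ γ) : matrixSize v b (x + y) ≤ γ := by
  rw [matrixSize_le_iff] at *
  intro i j
  rw [map_add, Matrix.add_apply]
  exact v.map_add_le (hx i j) (hy i j)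

lemma matrixSize_neg (x : D) : matrixSize v b (-x) = matrixSize v b x := by
  simp [matrixSize, Valuation.map_neg]

lemma matrixSize_mul_le (x y : D) :
    matrixSize v b (x * y) ≤ matrixSize v b x * matrixSize v b y := by
  rw [matrixSize_le_iff]
  intro i j
  rw [map_mul, Matrix.mul_apply]
  refine v.map_sum_le fun k _ => ?_
  rw [map_mul]
  exact mul_le_mul' (le_matrixSize v b x i k) (le_matrixSize v b y k j)

lemma matrixSize_smul_le (k : K) (x : D) :
    matrixSize v b (k • x) ≤ v k * matrixSize v b x := by
  rw [matrixSize_le_iff]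
  intro i j
  rw [map_smul, Matrix.smul_apply, smul_eq_mul, map_mul]
  exact mul_le_mul_right (le_matrixSize v b x i j) _

lemma le_matrixSize_smul (k : K) (x : D) :
    v k * matrixSize v b x ≤ matrixSize v b (k • x) := by
  rcases eq_or_ne k 0 with rfl | hk
  · simp
  have h := matrixSize_smul_le v b k⁻¹ (k • x)
  rw [inv_smul_smul₀ hk, map_inv₀] at h
  have hv : v k ≠ 0 := v.ne_zero_iff.2 hk
  calc v k * matrixSize v b x ≤ v k * ((v k)⁻¹ * matrixSize v b (k • x)) :=
        mul_le_mul_right h _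
    _ = _ := mul_inv_cancel_left₀ hv _

lemma matrixSize_one_le : matrixSize v b (1 : D) ≤ 1 := by
  rw [matrixSize_le_iff]
  intro i j
  rw [map_one, Matrix.one_apply]
  split_ifs <;> simp

lemma matrixSize_eq_zero {x : D} (h : matrixSize v b x = 0) : x = 0 := by
  apply Algebra.leftMulMatrix_injective b
  ext i j
  have := le_matrixSize v b x i j
  rw [h, le_zero_iff, v.zero_iff] at this
  simpa using this

lemma one_le_matrixSize_one : 1 ≤ matrixSize v b (1 : D) := by
  have h0 : matrixSize v b (1 : D) ≠ 0 := fun h => one_ne_zero (matrixSize_eq_zero v b h)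
  have h := matrixSize_mul_le v b (1 : D) 1
  rw [mul_one] at h
  by_contra! hlt
  exact absurd h (not_le.2 (mul_lt_of_lt_one_left (zero_lt_iff.2 h0) hlt))

lemma matrixSize_natCast_le (n : ℕ) : matrixSize v b (n : D) ≤ 1 := by
  induction n with
  | zero => simp [matrixSize]
  | succ n ih =>
    rw [Nat.cast_succ]
    exact matrixSize_add_le v b ih (matrixSize_one_le v b)

lemma one_add_ne_zero_of_small {u : D} (hu : matrixSize v b u < 1) : 1 + u ≠ 0 := by
  intro h
  rw [eq_neg_of_add_eq_zero_right h, matrixSize_neg] at hu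
  exact absurd hu (not_lt.2 (one_le_matrixSize_one v b))

/-- With `g = (1 + u)⁻¹` one has `g = 1 - u g`, so a size of `g` above `1` would be smaller
than itself. -/
lemma matrixSize_inv_one_add_le {u : D} (hu : matrixSize v b u < 1) :
    matrixSize v b (1 + u)⁻¹ ≤ 1 := by
  have hne := one_add_ne_zero_of_small v b hu
  set g := (1 + u)⁻¹ with hg
  have hgu : g = 1 + -(u * g) := by
    have : (1 + u) * g = 1 := mul_inv_cancel₀ hne
    rw [add_mul, one_mul] at this
    rw [← sub_eq_add_neg]
    exact eq_sub_of_add_eq this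
  by_contra! hlt
  have h1 : matrixSize v b (u * g) < matrixSize v b g :=
    (matrixSize_mul_le v b u g).trans_lt
      (mul_lt_of_lt_one_left (zero_lt_one.trans hlt) hu)
  have h2 : matrixSize v b g ≤ max 1 (matrixSize v b (u * g)) := by
    conv_lhs => rw [hgu]
    apply matrixSize_add_le
    · exact (matrixSize_one_le v b).trans (le_max_left _ _)
    · rw [matrixSize_neg]
      exact le_max_right _ _
  exact absurd h2 (not_le.2 (max_lt hlt h1))

lemma exists_one_add_pow_eq {w : D} (hw : matrixSize v b w ≤ 1) (n : ℕ) :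
    ∃ r : D, matrixSize v b r ≤ 1 ∧ (1 + w) ^ n = 1 + (n : D) * w + w * w * r := by
  induction n with
  | zero => exact ⟨0, by simp [matrixSize], by simp⟩
  | succ n ih =>
    obtain ⟨r, hr, h⟩ := ih
    refine ⟨r + n + w * r, ?_, ?_⟩
    · refine matrixSize_add_le v b (matrixSize_add_le v b hr (matrixSize_natCast_le v b n)) ?_
      exact (matrixSize_mul_le v b w r).trans (mul_le_one' hw hr)
    · have hc : w * (n : D) = n * w := (Nat.cast_commute n w).eq.symm
      have hc2 : w * ((n : D) * w) = w * w * n := by rw [← hc, mul_assoc]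
      rw [pow_succ', h]
      simp only [add_mul, mul_add, one_mul, mul_one, Nat.cast_succ, hc2, mul_assoc]
      abel

/-- In characteristic `q` this is the Frobenius identity; otherwise, in `q w + w² r = 0` the first
term dominates. -/
lemma eq_zero_of_one_add_pow_prime {π : K} (h1 : v π < 1)
    (hq : ∀ q : ℕ, q.Prime → (q : K) ≠ 0 → v π < v (q : K)) {q : ℕ} (hp : q.Prime) {w : D}
    (hw : matrixSize v b w ≤ v π) (h : (1 + w) ^ q = 1) : w = 0 := by
  by_cases hq0 : (q : K) = 0
  · have : Fact q.Prime := ⟨hp⟩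
    have hqD : (q : D) = 0 := by
      rw [← map_natCast (algebraMap K D), hq0, map_zero]
    have : CharP D q := by
      refine (CharP.exists D).elim fun p hpD => ?_
      have hdvd : p ∣ q := (CharP.cast_eq_zero_iff D p q).1 hqD
      rcases (Nat.dvd_prime hp).1 hdvd with rfl | rfl
      · exact absurd rfl (CharP.char_ne_one D 1)
      · exact hpD
    rw [add_pow_char_of_commute q (Commute.one_left w), one_pow] at h
    exact pow_eq_zero_iff hp.ne_zero |>.1 (by simpa using h)
  · obtain ⟨r, hr, hpow⟩ := exists_one_add_pow_eq v b (hw.trans h1.le) q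
    have heq : (q : K) • w = -(w * w * r) := by
      rw [Algebra.smul_def, map_natCast]
      rw [h, add_assoc] at hpow
      exact eq_neg_of_add_eq_zero_left (by simpa using hpow.symm)
    by_contra hw0
    have hpos : 0 < matrixSize v b w :=
      zero_lt_iff.2 fun h => hw0 (matrixSize_eq_zero v b h)
    have h2 : v (q : K) * matrixSize v b w ≤ v π * matrixSize v b w := by
      refine (le_matrixSize_smul v b _ _).trans ?_
      rw [heq, matrixSize_neg]
      calc matrixSize v b (w * w * r) ≤ matrixSize v b (w * w) * matrixSize v b r :=
            matrixSize_mul_le v b _ _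
        _ ≤ matrixSize v b (w * w) * 1 := mul_le_mul_right hr _
        _ ≤ matrixSize v b w * matrixSize v b w := by
            rw [mul_one]; exact matrixSize_mul_le v b _ _
        _ ≤ v π * matrixSize v b w := mul_le_mul_left hw _
    exact absurd (le_of_mul_le_mul_right h2 hpos) (not_le.2 (hq q hp hq0))

/-- Minkowski's argument: a root of unity congruent to `1` modulo `π` is `1`. -/
lemma eq_zero_of_one_add_pow {π : K} (h1 : v π < 1)
    (hq : ∀ q : ℕ, q.Prime → (q : K) ≠ 0 → v π < v (q : K)) (n : ℕ) (hn : 0 < n) :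
    ∀ w : D, matrixSize v b w ≤ v π → (1 + w) ^ n = 1 → w = 0 := by
  induction n using induction_on_primes with
  | zero => exact absurd hn (lt_irrefl _)
  | one => intro w _ h; simpa using h
  | prime_mul q m hp ih =>
    intro w hw h
    obtain ⟨r, hr, hpow⟩ := exists_one_add_pow_eq v b (hw.trans h1.le) q
    have hsmall : matrixSize v b ((q : D) * w + w * w * r) ≤ v π := by
      apply matrixSize_add_le
      · refine (matrixSize_mul_le v b _ _).trans ?_
        simpa using mul_le_mul' (matrixSize_natCast_le v b q) hw
      · rw [mul_assoc]
        refine (matrixSize_mul_le v b _ _).trans ?_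
        have : matrixSize v b (w * r) ≤ 1 :=
          (matrixSize_mul_le v b w r).trans (mul_le_one' (hw.trans h1.le) hr)
        simpa using mul_le_mul' hw this
    have h0 := ih (Nat.pos_of_mul_pos_left hn) _ hsmall (by
      rw [← add_assoc, ← hpow, ← pow_mul, h])
    refine eq_zero_of_one_add_pow_prime v b h1 hq hp hw ?_
    rw [hpow, add_assoc, h0, add_zero]

/-- For a small scalar `s`, the commutator of `1 + s y` and `a` is a root of unity congruent to `1`
modulo `π`, hence equal to `1`. -/
lemma commute_of_torsion_commutators (b : Module.Basis ι K D) {π : K} (hsurj : Function.Surjective v) (h0 : π ≠ 0)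
    (h1 : v π < 1) (hq : ∀ q : ℕ, q.Prime → (q : K) ≠ 0 → v π < v (q : K)) {a : D} (ha : a ≠ 0)
    (h : ∀ x : D, x ≠ 0 → ∃ n : ℕ, 0 < n ∧ (x * a * x⁻¹ * a⁻¹) ^ n = 1) (y : D) :
    a * y = y * a := by
  set y' := a * y * a⁻¹ with hy'
  obtain ⟨c, hc⟩ := hsurj (max 1 (max (matrixSize v b y) (matrixSize v b y')))
  have hc1 : 1 ≤ v c := hc ▸ le_max_left _ _
  have hcpos : 0 < v c := zero_lt_one.trans_le hc1
  have hc0 : c ≠ 0 := by rintro rfl; simp at hcpos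
  -- The scalar `s = π / c` makes both `s y` and its conjugate divisible by `π`.
  set s := π / c with hs
  have hs0 : s ≠ 0 := div_ne_zero h0 hc0
  have key : ∀ z, matrixSize v b z ≤ v c → matrixSize v b (s • z) ≤ v π := by
    intro z hz
    refine (matrixSize_smul_le v b s z).trans ?_
    calc v s * matrixSize v b z ≤ v s * v c := mul_le_mul_right hz _
      _ = v π := by rw [← map_mul, hs, div_mul_cancel₀ _ hc0]
  have hy1 := key y (by rw [hc]; exact (le_max_left _ _).trans (le_max_right _ _))
  have hy2 := key y' (by rw [hc]; exact (le_max_right _ _).trans (le_max_right _ _))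
  have hne := one_add_ne_zero_of_small v b (hy1.trans_lt h1)
  have hne' := one_add_ne_zero_of_small v b (hy2.trans_lt h1)
  obtain ⟨n, hn, hpow⟩ := h _ hne
  have hconj : a * (1 + s • y) * a⁻¹ = 1 + s • y' := by
    rw [hy', mul_add, add_mul, mul_one, mul_inv_cancel₀ ha, mul_smul_comm, smul_mul_assoc]
  have hinv : a * (1 + s • y)⁻¹ * a⁻¹ = (1 + s • y')⁻¹ := by
    rw [← hconj, mul_inv_rev, mul_inv_rev, inv_inv, mul_assoc]
  have hw : (1 + s • y) * a * (1 + s • y)⁻¹ * a⁻¹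
      = 1 + (s • y + -(s • y')) * (1 + s • y')⁻¹ := by
    have e : s • y + -(s • y') = (1 + s • y) - (1 + s • y') := by abel
    rw [e, sub_mul, mul_inv_cancel₀ hne', ← hinv]
    simp only [mul_assoc]
    abel
  rw [hw] at hpow
  have hz := eq_zero_of_one_add_pow v b h1 hq n hn _ (by
    refine (matrixSize_mul_le v b _ _).trans ?_
    have := matrixSize_add_le v b hy1 (by rw [matrixSize_neg]; exact hy2)
    simpa using mul_le_mul' this (matrixSize_inv_one_add_le v b (hy2.trans_lt h1))) hpow
  have hz' : s • y + -(s • y') = 0 :=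
    (mul_eq_zero.1 hz).resolve_right (inv_ne_zero hne')
  rw [← sub_eq_add_neg, ← smul_sub, smul_eq_zero] at hz'
  have hyy : y = y' := sub_eq_zero.1 (hz'.resolve_left hs0)
  conv_rhs => rw [hyy, hy', inv_mul_cancel_right₀ ha]

end Size

/-! ### Valuations on the base field -/

lemma not_isIntegral_half (K : Type*) [Field K] [CharZero K] : ¬ IsIntegral ℤ ((2 : K)⁻¹) := by
  intro h
  have h' : IsIntegral ℤ (algebraMap ℚ K (2⁻¹ : ℚ)) := by simpa using h
  rw [isIntegral_algebraMap_iff (algebraMap ℚ K).injective,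
    IsIntegrallyClosed.isIntegral_iff] at h'
  obtain ⟨n, hn⟩ := h'
  have h2 : (n : ℚ) * 2 = 1 := by
    have : (n : ℚ) = 2⁻¹ := by simpa using hn
    rw [this]; norm_num
  have h3 : n * 2 = 1 := by exact_mod_cast h2
  omega

lemma exists_valuationSubring_notMem {K : Type*} [Field K] {t : K} (ht : ¬ IsIntegral ℤ t) :
    ∃ A : ValuationSubring K, t ∉ A := by
  by_contra! hall
  apply ht
  have hmem : t ∈ (⨅ V : {V : ValuationSubring K // (∅ : Set K) ⊆ V.toSubring},
      V.1.toSubring) := by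
    rw [Subring.mem_iInf]
    exact fun V => hall V.1
  rw [iInf_valuationSubring_superset] at hmem
  have hint : IsIntegral (Subring.closure (∅ : Set K)) t := hmem
  have : Algebra.IsIntegral ℤ (Subring.closure (∅ : Set K)) := by
    refine ⟨fun x => ?_⟩
    obtain ⟨x, hx⟩ := x
    have hx' := hx
    rw [Subring.closure_empty, Subring.mem_bot] at hx'
    obtain ⟨n, rfl⟩ := hx'
    exact isIntegral_algebraMap (x := n)
  exact isIntegral_trans (R := ℤ) t hint

/-- In characteristic zero `π = 4` works for a valuation with `v 2 < 1`; in positive characteristic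
the nonzero prime numbers are roots of unity, so any `π ≠ 0` with `v π < 1` works. -/
lemma exists_valuation_small {K : Type*} [Field K] (hK : ∃ t : K, ¬ IsIntegral ℤ t) :
    ∃ (A : ValuationSubring K) (π : K), π ≠ 0 ∧ A.valuation π < 1 ∧
      ∀ q : ℕ, q.Prime → (q : K) ≠ 0 → A.valuation π < A.valuation (q : K) := by
  have inv_small : ∀ (A : ValuationSubring K) (t : K), t ∉ A → A.valuation t⁻¹ < 1 := by
    intro A t ht
    rw [← A.valuation_le_one_iff, not_le] at ht
    rw [map_inv₀]
    exact inv_lt_one_of_one_lt₀ ht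
  obtain ⟨p, hp⟩ := CharP.exists K
  rcases CharP.char_is_prime_or_zero K p with hpp | rfl
  · obtain ⟨t, ht⟩ := hK
    obtain ⟨A, hA⟩ := exists_valuationSubring_notMem ht
    have ht0 : t ≠ 0 := fun h => hA (h ▸ A.zero_mem)
    refine ⟨A, t⁻¹, inv_ne_zero ht0, inv_small A t hA, fun q _ hq0 => ?_⟩
    have : Fact p.Prime := ⟨hpp⟩
    have hz : ((q : ZMod p)) ≠ 0 := by
      intro h
      rw [ZMod.natCast_eq_zero_iff] at h
      exact hq0 ((CharP.cast_eq_zero_iff K p q).2 h)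
    have hpow : (q : K) ^ (p - 1) = 1 := by
      have := ZMod.pow_card_sub_one_eq_one hz
      have := congrArg (ZMod.castHom dvd_rfl K) this
      simpa using this
    have hv : A.valuation (q : K) = 1 := by
      have h2 := congrArg A.valuation hpow
      rw [map_pow, map_one] at h2
      exact (pow_eq_one_iff.1 h2).resolve_right (by have := hpp.two_le; omega)
    rw [hv]
    exact inv_small A t hA
  · have : CharZero K := CharP.charP_to_charZero K
    obtain ⟨A, hA⟩ := exists_valuationSubring_notMem (not_isIntegral_half K)
    have h2 : A.valuation (2 : K) < 1 := by simpa using inv_small A _ hA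
    have h20 : A.valuation (2 : K) ≠ 0 := A.valuation.ne_zero_iff.2 two_ne_zero
    have h4 : A.valuation (2 * 2 : K) < A.valuation (2 : K) := by
      rw [map_mul]
      exact mul_lt_of_lt_one_left (zero_lt_iff.2 h20) h2
    have hnat : ∀ n : ℕ, A.valuation (n : K) ≤ 1 := fun n =>
      (A.valuation_le_one_iff _).2 (natCast_mem A n)
    refine ⟨A, 2 * 2, by norm_num, h4.trans h2, fun q hq _ => ?_⟩
    rcases hq.eq_two_or_odd' with rfl | ⟨k, rfl⟩
    · exact_mod_cast h4
    · have hk : A.valuation (2 * k : K) < 1 := by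
        rw [map_mul]
        exact (mul_le_of_le_one_right' (hnat k)).trans_lt h2
      have : A.valuation (((2 * k + 1 : ℕ) : K)) = 1 := by
        push_cast
        rw [Valuation.map_add_eq_of_lt_right _ (by simpa using hk), map_one]
      rw [this]
      exact h4.trans h2

/-! ### Division algebras whose commutators with a fixed element are torsion -/

/-- Jacobson's theorem in the finite-dimensional case: the left multiplication matrices of two
given elements have entries in a common finite subring of `K`. -/
lemma commute_of_isIntegral {K D : Type*} [Field K] [DivisionRing D] [Algebra K D]
    [FiniteDimensional K D] (hK : ∀ t : K, IsIntegral ℤ t) (x y : D) : x * y = y * x := by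
  obtain ⟨p, hp⟩ := CharP.exists K
  rcases CharP.char_is_prime_or_zero K p with hpp | rfl
  swap
  · have : CharZero K := CharP.charP_to_charZero K
    exact absurd (hK _) (not_isIntegral_half K)
  have : Fact p.Prime := ⟨hpp⟩
  let _ : Algebra (ZMod p) K := ZMod.algebra K p
  classical
  let b := Module.finBasis K D
  let S : Set K := Set.range (fun ij : _ × _ => Algebra.leftMulMatrix b x ij.1 ij.2) ∪
    Set.range (fun ij : _ × _ => Algebra.leftMulMatrix b y ij.1 ij.2)
  let R := Algebra.adjoin (ZMod p) S
  have hfg : (Subalgebra.toSubmodule R).FG :=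
    fg_adjoin_of_finite ((Set.finite_range _).union (Set.finite_range _))
      fun t _ => (hK t).tower_top
  have hfin : Module.Finite (ZMod p) R := Module.Finite.iff_fg.2 hfg
  have hR : Finite R := Module.finite_of_finite (ZMod p)
  let T : Subring D :=
    { carrier := {z | ∀ i j, Algebra.leftMulMatrix b z i j ∈ R}
      zero_mem' := fun i j => by simp
      one_mem' := fun i j => by
        rw [map_one, Matrix.one_apply]
        split_ifs
        · exact R.one_mem
        · exact R.zero_mem
      add_mem' := fun hx hy i j => by
        rw [map_add, Matrix.add_apply]
        exact R.add_mem (hx i j) (hy i j)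
      neg_mem' := fun hx i j => by
        rw [map_neg, Matrix.neg_apply]
        exact R.neg_mem (hx i j)
      mul_mem' := fun hx hy i j => by
        rw [map_mul, Matrix.mul_apply]
        exact R.sum_mem fun k _ => R.mul_mem (hx i k) (hy k j) }
  have hT : Finite T := by
    refine Finite.of_injective
      (fun (z : T) i j => (⟨Algebra.leftMulMatrix b (z : D) i j, z.2 i j⟩ : R)) ?_
    intro z z' h
    apply Subtype.ext
    apply Algebra.leftMulMatrix_injective b
    ext i j
    exact congrArg Subtype.val (congrFun (congrFun h i) j)
  have hx : x ∈ T := fun i j => Algebra.subset_adjoin (Or.inl ⟨(i, j), rfl⟩)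
  have hy : y ∈ T := fun i j => Algebra.subset_adjoin (Or.inr ⟨(i, j), rfl⟩)
  exact congrArg Subtype.val
    ((Finite.isDomain_to_isField T).mul_comm ⟨x, hx⟩ ⟨y, hy⟩)

lemma commute_of_commutators_torsion {K D : Type*} [Field K] [DivisionRing D] [Algebra K D]
    [FiniteDimensional K D] {a : D} (ha : a ≠ 0)
    (h : ∀ x : D, x ≠ 0 → ∃ n : ℕ, 0 < n ∧ (x * a * x⁻¹ * a⁻¹) ^ n = 1) (y : D) :
    a * y = y * a := by
  by_cases hK : ∃ t : K, ¬ IsIntegral ℤ t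
  · obtain ⟨A, π, h0, h1, hq⟩ := exists_valuation_small hK
    exact commute_of_torsion_commutators A.valuation (Module.finBasis K D)
      A.valuation_surjective h0 h1 hq ha h y
  · push Not at hK
    exact commute_of_isIntegral hK a y

/-- A commutator has norm `1`, so a power of it that is a scalar is a root of unity. -/
lemma commutator_torsion {K D : Type*} [Field K] [DivisionRing D] [Algebra K D]
    [FiniteDimensional K D] {x a : D} (hx : x ≠ 0) (ha : a ≠ 0) {n : ℕ} (hn : 0 < n) {k : K}
    (h : (x * a * x⁻¹ * a⁻¹) ^ n = algebraMap K D k) :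
    ∃ m : ℕ, 0 < m ∧ (x * a * x⁻¹ * a⁻¹) ^ m = 1 := by
  refine ⟨n * Module.finrank K D, Nat.mul_pos hn Module.finrank_pos, ?_⟩
  have h1 : Algebra.norm K (x * a * x⁻¹ * a⁻¹) = 1 := by
    have e1 : Algebra.norm K x * Algebra.norm K x⁻¹ = 1 := by
      rw [← map_mul, mul_inv_cancel₀ hx, map_one]
    have e2 : Algebra.norm K a * Algebra.norm K a⁻¹ = 1 := by
      rw [← map_mul, mul_inv_cancel₀ ha, map_one]
    simp only [map_mul]
    linear_combination e1 * Algebra.norm K a * Algebra.norm K a⁻¹ + e2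
  have h2 : k ^ Module.finrank K D = 1 := by
    rw [← Algebra.norm_algebraMap, ← h, map_pow, h1, one_pow]
  rw [pow_mul, h, ← map_pow, h2, map_one]

/-! ### Normal subgroups radical over centralizers -/

/-- The Cartan–Brauer–Hua argument, for the double centralizer of `N`. -/
lemma mem_center_of_commute_normal {D : Type*} [DivisionRing D] (N : Subgroup Dˣ) [N.Normal]
    {a : Dˣ} (ha : a ∈ N) (hna : (a : D) ∉ Subring.center D) {c : D}
    (hc : ∀ y ∈ N, c * (y : D) = y * c) : c ∈ Subring.center D := by
  -- It suffices that elements not commuting with `c` commute with `a`.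
  have key : ∀ x : D, c * x ≠ x * c → (a : D) * x = x * a := by
    intro x hx
    have hx0 : x ≠ 0 := by rintro rfl; simp at hx
    have hx1 : 1 + x ≠ 0 := by
      intro h
      rw [eq_neg_of_add_eq_zero_right h] at hx
      simp at hx
    have hconj : ∀ z : D, z ≠ 0 → c * (z * a * z⁻¹) = (z * a * z⁻¹) * c := by
      intro z hz
      have := hc _ (Subgroup.Normal.conj_mem ‹N.Normal› a ha (Units.mk0 z hz))
      simpa using this
    set a1 := x * a * x⁻¹ with h1
    set a2 := (1 + x) * a * (1 + x)⁻¹ with h2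
    have e1 : a1 * x = x * a := inv_mul_cancel_right₀ hx0 _
    have e2 : a2 * (1 + x) = (1 + x) * a := inv_mul_cancel_right₀ hx1 _
    have e3 : (a1 - a2) * x = a2 - a := by
      rw [mul_add, mul_one, add_mul, one_mul] at e2
      rw [sub_mul, e1, sub_eq_sub_iff_add_eq_add, add_comm (x * (a : D)), e2]
    have c1 : c * a1 = a1 * c := hconj x hx0
    have c2 : c * a2 = a2 * c := hconj _ hx1
    by_cases h12 : a1 = a2
    · rw [h12, sub_self, zero_mul] at e3
      rw [← e1, h12, sub_eq_zero.1 e3.symm]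
    · exfalso
      apply hx
      have hd : a1 - a2 ≠ 0 := sub_ne_zero.2 h12
      have cd : Commute c (a1 - a2) := Commute.sub_right c1 c2
      have ce : Commute c (a2 - a) := Commute.sub_right c2 (hc a ha)
      rw [← e3] at ce
      have : x = (a1 - a2)⁻¹ * ((a1 - a2) * x) := (inv_mul_cancel_left₀ hd x).symm
      rw [this]
      exact (cd.inv_right₀.mul_right ce).eq
  rw [Subring.mem_center_iff]
  by_contra! hcc
  obtain ⟨z, hz⟩ := hcc
  apply hna
  rw [Subring.mem_center_iff]
  intro x
  by_cases hx : c * x = x * c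
  · have hxz := key (x + z) (by
      rw [mul_add, add_mul, hx]
      exact fun h => hz (add_left_cancel h).symm)
    have hz' := key z (fun h => hz h.symm)
    rw [mul_add, add_mul, hz'] at hxz
    exact (add_right_cancel hxz).symm
  · exact (key x hx).symm

/-- Finitely many elements of `N` span the span of `N` over the center, so one power of `x`
commutes with all of `N` at once. -/
lemma exists_pow_commute (D : Type*) [DivisionRing D] [Module.Finite (Subring.center D) D]
    (N : Subgroup Dˣ)
    (hcomm : ∀ x ∈ N, ∀ y ∈ N,
      ∃ n : ℕ, 0 < n ∧ ((x : Dˣ) : D) ^ n * ((y : Dˣ) : D) = ((y : Dˣ) : D) * ((x : Dˣ) : D) ^ n)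
    (x : Dˣ) (hx : x ∈ N) :
    ∃ n : ℕ, 0 < n ∧ ∀ y ∈ N, (x : D) ^ n * (y : D) = y * (x : D) ^ n := by
  classical
  obtain ⟨s, hs, hspan⟩ := (Submodule.fg_span_iff_fg_span_finset_subset
    (R := Subring.center D) ((fun u : Dˣ => (u : D)) '' (N : Set Dˣ))).1
      (IsNoetherian.noetherian _)
  have hex : ∀ y : s, ∃ n : ℕ, 0 < n ∧ Commute ((x : D) ^ n) (y : D) := by
    rintro ⟨y, hy⟩
    obtain ⟨u, hu, rfl⟩ := hs hy
    exact hcomm x hx u hu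
  choose f hf0 hf using hex
  refine ⟨∏ y, f y, Finset.prod_pos fun y _ => hf0 y, fun y hy => ?_⟩
  have hmem : (y : D) ∈ Submodule.span (Subring.center D) (s : Set D) :=
    hspan ▸ Submodule.subset_span ⟨y, hy, rfl⟩
  generalize (y : D) = z at hmem
  induction hmem using Submodule.span_induction with
  | mem z hz =>
    obtain ⟨k, hk⟩ := Finset.dvd_prod_of_mem f (Finset.mem_univ (⟨z, hz⟩ : s))
    rw [hk, pow_mul]
    exact ((hf ⟨z, hz⟩).pow_left k).eq
  | zero => simp
  | add u w _ _ hu hw => rw [mul_add, add_mul, hu, hw]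
  | smul k u _ hu => rw [mul_smul_comm, smul_mul_assoc, hu]

/-- Let `D` be a centrally finite division ring with center `F` and `N` a normal subgroup
of `D^*`. If for all `x, y ∈ N` there is a positive integer `n` with `x^n * y = y * x^n`,
then `N ⊆ F`. -/
theorem stmt_7 (D : Type*) [DivisionRing D]
    [Module.Finite (Subring.center D) D]
    (N : Subgroup Dˣ) [N.Normal]
    (hcomm : ∀ x ∈ N, ∀ y ∈ N,
      ∃ n : ℕ, 0 < n ∧ ((x : Dˣ) : D) ^ n * ((y : Dˣ) : D) = ((y : Dˣ) : D) * ((x : Dˣ) : D) ^ n) :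
    ∀ a ∈ N, ((a : Dˣ) : D) ∈ Subring.center D := by
  intro a ha
  by_contra hna
  apply hna
  rw [Subring.mem_center_iff]
  intro y
  refine (commute_of_commutators_torsion (K := Subring.center D) a.ne_zero ?_ y).symm
  intro x hx
  have hmem : Units.mk0 x hx * a * (Units.mk0 x hx)⁻¹ * a⁻¹ ∈ N :=
    N.mul_mem (Subgroup.Normal.conj_mem ‹N.Normal› a ha _) (N.inv_mem ha)
  obtain ⟨n, hn, hcn⟩ := exists_pow_commute D N hcomm _ hmem
  have hcent := mem_center_of_commute_normal N ha hna hcn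
  refine commutator_torsion (K := Subring.center D) hx a.ne_zero hn (k := ⟨_, hcent⟩) ?_
  change _ = ((Units.mk0 x hx * a * (Units.mk0 x hx)⁻¹ * a⁻¹ : Dˣ) : D) ^ n
  simp
end

section
/- Let D be a centrally finite division ring with center F, K a proper division subring of D, and N a normal subgroup of D^*. If every element of N has some positive power lying in K, then N ⊆ F. -/
/-!
Let `F` be the center of `D`. The proof first replaces `K` by `F`, then shows that a normal subgroup
radical over `F` is central.

*From `K` to `F`* (`exists_pow_commute`, `exists_pow_mem_center`). Let `a ∈ N ∩ K` and `t ∉ K`. For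
some `n`, both `c = t aⁿ t⁻¹` and `d = (t + 1) aⁿ (t + 1)⁻¹` lie in `K`, and
`(d - c) t = aⁿ - d`. As `t ∉ K`, this forces `c = d = aⁿ`, so `aⁿ` commutes with `t`. If `t ∈ K` and
`s ∉ K`, a power of `a` commutes with both `s` and `s + t`, hence with `t`. Running over a finite
spanning set of `D` over `F`, some power of `a` is central.

*Radical over `F` implies central* (`commute_of_radical_over_center`). Suppose `a ∈ N` and `b ∈ D`.
For central `t`, the element `g(t) = (1 + t b) a (1 + t b)⁻¹ a⁻¹` lies in `N`, so a power of it is a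
scalar; its norm over `F` is `1`, so it is a root of unity. The orders of the `g(t)` turn out to be
bounded for `t` in a suitable subfield `E`: choose `E` purely transcendental over the prime field `k`
with `F` algebraic over `E`. The `E`-algebra generated by `a` and `b` is finite-dimensional
(`finite_adjoin`), so `g(t)` has bounded degree over `E`. The minimal polynomial of a root of unity
over `E` has coefficients algebraic over `k`, hence in `k`, so `g(t)` has bounded degree over `k`, and
`g(t) ^ e = 1` for one exponent `e` that is nonzero in `k`. If `E` is finite, `a` and `b` commute by
Wedderburn's little theorem. If `E` is infinite, `g(t) ^ e = 1` becomes a polynomial identity in `t`;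
the terms of degree one give `e (b - a b a⁻¹) = 0` (`commute_of_commutator_pow_eq_one`).
-/

section

open Polynomial

/-! ### Roots of unity of bounded degree over a prime field -/

/-- Roots of unity of bounded degree over `k` have bounded order: for each `m`, a single exponent `e`,
nonzero in `k`, kills every root of unity of degree at most `m` over `k`. A root of unity is encoded
by its minimal polynomial `f`, which divides `X ^ n - 1` for some `n > 0`. -/
def BoundedRootsOfUnity (k : Type*) [Field k] : Prop :=
  ∀ m : ℕ, ∃ e : ℕ, (e : k) ≠ 0 ∧ ∀ f : k[X], Irreducible f → f.natDegree ≤ m →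
    (∃ n : ℕ, 0 < n ∧ f ∣ X ^ n - 1) → f ∣ X ^ e - 1

theorem dvd_factorial_of_totient_le {m n : ℕ} (hn : 0 < n) (h : n.totient ≤ m) :
    n ∣ (2 * m).factorial := by
  refine (Nat.dvd_iff_prime_pow_dvd_dvd _ _).2 fun p j hp hd => ?_
  obtain _ | j := j
  · simp
  refine Nat.dvd_factorial (pow_pos hp.pos _) ?_
  have h1 : (p ^ (j + 1)).totient ≤ m :=
    (Nat.le_of_dvd (Nat.totient_pos.2 hn) (Nat.totient_dvd_of_dvd hd)).trans h
  rw [Nat.totient_prime_pow_succ hp] at h1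
  have h2 : p ≤ 2 * (p - 1) := by have := hp.two_le; omega
  calc p ^ (j + 1) = p ^ j * p := pow_succ _ _
    _ ≤ p ^ j * (2 * (p - 1)) := Nat.mul_le_mul_left _ h2
    _ ≤ 2 * m := by nlinarith

/-- An irreducible factor of `X ^ n - 1` over `ℚ` is a cyclotomic polynomial, of degree `φ(d)`, and
`φ(d) ≤ m` forces `d ∣ (2m)!`. -/
theorem boundedRootsOfUnity_rat : BoundedRootsOfUnity ℚ := by
  intro m
  refine ⟨(2 * m).factorial, by exact_mod_cast (Nat.factorial_pos _).ne', ?_⟩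
  rintro f hf hm ⟨n, hn, hfn⟩
  rw [← prod_cyclotomic_eq_X_pow_sub_one hn ℚ] at hfn
  obtain ⟨d, hd, hfd⟩ := (hf.prime.dvd_finsetProd_iff _).1 hfn
  have hd0 : 0 < d := Nat.pos_of_mem_divisors hd
  have hassoc := hf.associated_of_dvd (cyclotomic.irreducible_rat hd0) hfd
  have hdeg : d.totient ≤ m := by
    rw [← natDegree_cyclotomic d ℚ, ← natDegree_eq_of_degree_eq (degree_eq_degree_of_associated hassoc)]
    exact hm
  refine hfd.trans ((cyclotomic.dvd_X_pow_sub_one d ℚ).trans ?_)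
  obtain ⟨c, hc⟩ := dvd_factorial_of_totient_le hd0 hdeg
  rw [hc]
  exact pow_one_sub_dvd_pow_mul_sub_one _ _ _

/-- A root of unity of degree `i ≤ m` lies in the field with `p ^ i` elements, and `i ∣ m!`. -/
theorem boundedRootsOfUnity_zmod (p : ℕ) [hp : Fact p.Prime] : BoundedRootsOfUnity (ZMod p) := by
  intro m
  refine ⟨p ^ m.factorial - 1, ?_, ?_⟩
  · rw [Nat.cast_sub (Nat.one_le_pow _ _ hp.out.pos)]
    simp [Nat.factorial_ne_zero]
  rintro f hf hm ⟨n, hn, hfn⟩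
  have := Fact.mk hf
  have : Module.Finite (ZMod p) (AdjoinRoot f) := (AdjoinRoot.powerBasis hf.ne_zero).finite
  have : Finite (AdjoinRoot f) := Module.finite_of_finite (ZMod p)
  have := Fintype.ofFinite (AdjoinRoot f)
  have hcard : Fintype.card (AdjoinRoot f) = p ^ f.natDegree := by
    rw [Module.card_eq_pow_finrank (K := ZMod p), ZMod.card,
      (AdjoinRoot.powerBasis hf.ne_zero).finrank, AdjoinRoot.powerBasis_dim]
  have hroot : (AdjoinRoot.root f) ≠ 0 := by
    intro h0
    have := AdjoinRoot.mk_eq_zero.2 hfn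
    simp [h0, hn.ne'] at this
  have h1 := FiniteField.pow_card_sub_one_eq_one _ hroot
  rw [← AdjoinRoot.mk_eq_zero]
  rw [hcard] at h1
  obtain ⟨c, hc⟩ : p ^ f.natDegree - 1 ∣ p ^ m.factorial - 1 :=
    Nat.pow_sub_one_dvd_pow_sub_one p (Nat.dvd_factorial hf.natDegree_pos hm)
  simp [hc, pow_mul, h1]

/-! ### A purely transcendental subfield -/

/-- The subfield `E` generated over `k` by a transcendence basis. That `k` is algebraically closed in
`E` follows because the basis stays algebraically independent over the algebraic closure of `k` in
`F`: if `c = u / v` is algebraic, coefficients can be compared in `u - c v = 0`. -/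
theorem exists_purely_transcendental (k F : Type*) [Field k] [Field F] [Algebra k F] :
    ∃ E : IntermediateField k F, Algebra.IsAlgebraic E F ∧
      ∀ c : E, IsAlgebraic k c → c ∈ (algebraMap k E).range := by
  obtain ⟨ι, x, hx⟩ := exists_isTranscendenceBasis' k F
  refine ⟨IntermediateField.adjoin k (Set.range x), hx.isAlgebraic_field, ?_⟩
  rintro ⟨c, hc⟩ halg
  have halg' : IsAlgebraic k c :=
    (isAlgebraic_algebraMap_iff (A := F) (FaithfulSMul.algebraMap_injective _ _)).2 halg
  obtain ⟨u, v, huv⟩ := (IntermediateField.mem_adjoin_range_iff k x c).1 hc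
  have hind := hx.1.algebraicClosure
  let c' : algebraicClosure k F := ⟨c, mem_algebraicClosure_iff.2 halg'⟩
  let ι' := algebraMap k (algebraicClosure k F)
  by_cases hv : MvPolynomial.aeval x v = 0
  · refine ⟨0, ?_⟩
    apply Subtype.ext
    simp [huv, hv]
  have hv0 : v ≠ 0 := by rintro rfl; simp at hv
  obtain ⟨s, hs⟩ := MvPolynomial.ne_zero_iff.1 hv0
  have key : MvPolynomial.map ι' u - MvPolynomial.C c' * MvPolynomial.map ι' v = 0 := by
    apply hind 
    rw [map_zero, map_sub, map_mul, MvPolynomial.aeval_map_algebraMap,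
      MvPolynomial.aeval_map_algebraMap, MvPolynomial.aeval_C]
    change _ - c * _ = 0
    rw [huv, div_mul_cancel₀ _ hv, sub_self]
  have := congrArg (MvPolynomial.coeff s) key
  simp only [MvPolynomial.coeff_sub, MvPolynomial.coeff_map, MvPolynomial.coeff_C_mul,
    MvPolynomial.coeff_zero, sub_eq_zero] at this
  refine ⟨u.coeff s / v.coeff s, ?_⟩
  apply Subtype.ext
  have h2 := congrArg (algebraMap (algebraicClosure k F) F) this
  rw [map_mul, ← IsScalarTower.algebraMap_apply, ← IsScalarTower.algebraMap_apply] at h2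
  change algebraMap k F (u.coeff s / v.coeff s) = c
  rw [map_div₀, h2, mul_div_assoc, div_self, mul_one]
  · rfl
  · simpa using hs

/-- Finitely generated subalgebras are finite-dimensional over `E`: in the regular representation over
`F`, the generators are matrices whose finitely many entries lie in a finite extension `L` of `E`. -/
theorem finite_adjoin {E F D : Type*} [Field E] [Field F] [Ring D] [Algebra E F] [Algebra F D]
    [Algebra E D] [IsScalarTower E F D] [Algebra.IsAlgebraic E F] [Module.Finite F D]
    (s : Set D) (hs : s.Finite) : FiniteDimensional E (Algebra.adjoin E s) := by
  classical
  let b := Module.finBasis F D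
  let n := Fin (Module.finrank F D)
  let T : Set F := ⋃ d ∈ s, Set.range fun ij : n × n => Algebra.leftMulMatrix b d ij.1 ij.2
  have hT : T.Finite := hs.biUnion fun d _ => Set.finite_range _
  let L := IntermediateField.adjoin E T
  have : FiniteDimensional E L := by
    have := hT.to_subtype
    exact IntermediateField.finiteDimensional_adjoin fun x _ => Algebra.IsIntegral.isIntegral x
  let φ : D →ₐ[E] Matrix n n F := (Algebra.leftMulMatrix b).restrictScalars E
  let R : Subalgebra E (Matrix n n F) := (L.val.mapMatrix (m := n)).range
  have hR : FiniteDimensional E R :=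
    inferInstanceAs (FiniteDimensional E (LinearMap.range (L.val.mapMatrix (m := n)).toLinearMap))
  have hle : Algebra.adjoin E s ≤ R.comap φ := by
    refine Algebra.adjoin_le fun d hd => ?_
    refine ⟨fun i j => ⟨Algebra.leftMulMatrix b d i j, ?_⟩, ?_⟩
    · exact IntermediateField.subset_adjoin _ _ (Set.mem_biUnion hd ⟨(i, j), rfl⟩)
    · ext i j; rfl
  let ψ : Algebra.adjoin E s →ₗ[E] R :=
    (φ.toLinearMap.comp (Algebra.adjoin E s).val.toLinearMap).codRestrict
      (Subalgebra.toSubmodule R) fun x => hle x.2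
  refine FiniteDimensional.of_injective ψ fun x y hxy => ?_
  have h1 : φ x = φ y := congrArg Subtype.val hxy
  exact Subtype.ext (Algebra.leftMulMatrix_injective b h1)

/-- Since `k` is algebraically closed in `E`, the minimal polynomial over `E` of a root of unity
descends to `k`, and so a bound on its degree gives a bound on its order. -/
theorem pow_eq_one_of_natDegree_minpoly_le {k E D : Type*} [Field k] [Field E] [DivisionRing D]
    [Algebra k E] [Algebra E D]
    (hcl : ∀ c : E, IsAlgebraic k c → c ∈ (algebraMap k E).range) {m e : ℕ}
    (he : ∀ f : k[X], Irreducible f → f.natDegree ≤ m →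
      (∃ n : ℕ, 0 < n ∧ f ∣ X ^ n - 1) → f ∣ X ^ e - 1)
    {z : D} (hz : IsIntegral E z) (hm : (minpoly E z).natDegree ≤ m)
    {n : ℕ} (hn : 0 < n) (hzn : z ^ n = 1) : z ^ e = 1 := by
  have hdvd : minpoly E z ∣ ((X : k[X]) ^ n - 1).map (algebraMap k E) :=
    minpoly.dvd _ _ (by simp [hzn])
  have hmon : ((X : k[X]) ^ n - 1).Monic := by
    simpa using monic_X_pow_sub_C (1 : k) hn.ne'
  have hlift : minpoly E z ∈ lifts (algebraMap k E) := by
    rw [lifts_iff_coeff_lifts]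
    intro i
    exact hcl _ (isIntegral_coeff_of_dvd _ _ hmon (minpoly.monic hz) hdvd i).isAlgebraic
  obtain ⟨f, hf, hfdeg, hfmon⟩ := lifts_and_natDegree_eq_and_monic hlift (minpoly.monic hz)
  have hirr : Irreducible f :=
    hfmon.irreducible_of_irreducible_map (algebraMap k E) _ (hf ▸ minpoly.irreducible hz)
  have h1 : f ∣ X ^ n - 1 := by
    rw [← hf] at hdvd
    exact (map_dvd_map' _).1 hdvd
  have h2 := (map_dvd_map' (algebraMap k E)).2 (he f hirr (hfdeg.trans_le hm) ⟨n, hn, h1⟩)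
  rw [hf, minpoly.dvd_iff] at h2
  simpa [sub_eq_zero] using h2

/-! ### The polynomial identity -/

theorem eq_zero_of_forall_eval_eq_zero {E D : Type*} [Field E] [Infinite E] [Ring D] [Algebra E D]
    (P : D[X]) (h : ∀ t : E, P.eval (algebraMap E D t) = 0) : P = 0 := by
  ext i
  rw [coeff_zero, ← Module.forall_dual_apply_eq_zero_iff E]
  intro φ
  let Q : E[X] := ∑ j ∈ P.support, monomial j (φ (P.coeff j))
  have hQ : Q = 0 := by
    refine Polynomial.funext fun t => ?_
    have h1 := congrArg φ (h t)
    rw [eval_eq_sum, Polynomial.sum, map_sum, map_zero] at h1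
    rw [eval_zero, ← h1, eval_finsetSum]
    refine Finset.sum_congr rfl fun j _ => ?_
    rw [eval_monomial, ← map_pow, ← Algebra.commutes, ← Algebra.smul_def, map_smul, smul_eq_mul,
      mul_comm]
  have h2 := congrArg (coeff · i) hQ
  simp only [Q, finsetSum_coeff, coeff_monomial, Finset.sum_ite_eq', coeff_zero] at h2
  split_ifs at h2 with h3
  · exact h2
  · rw [notMem_support_iff.1 h3, map_zero]

/-- A polynomial inverse of `1 + b X` up to a factor `f` with central coefficients. It is obtained from
the minimal polynomial `f` of `-b⁻¹`, which has `X + b⁻¹` as a left factor; `f(0) ≠ 0` as `b⁻¹ ≠ 0`. -/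
theorem exists_one_add_mul_eq_map {E D : Type*} [Field E] [DivisionRing D] [Algebra E D]
    {b : D} (hb : b ≠ 0) (hint : IsIntegral E b) :
    ∃ (q : D[X]) (f : E[X]), f.coeff 0 ≠ 0 ∧
      (1 + C b * X) * q = f.map (algebraMap E D) := by
  have hr : -b⁻¹ ≠ 0 := by simpa using hb
  have hri : IsIntegral E (-b⁻¹) := hint.inv.neg
  set r := -b⁻¹ with hrdef
  set f := minpoly E r with hf
  have hcomm : ∀ (c : E) (x : D), algebraMap E D c * x = x * algebraMap E D c :=
    fun c x => Algebra.commutes c x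
  have hdvd : (X - C r) ∣ f.map (algebraMap E D) := by
    have h0 : ∑ i ∈ f.support, C (algebraMap E D (f.coeff i)) * C r ^ i = 0 := by
      have h1 : aeval r f = 0 := minpoly.aeval E r
      rw [aeval_def, eval₂_eq_sum, Polynomial.sum] at h1
      simpa using congrArg (C : D →+* D[X]) h1
    have h2 : f.map (algebraMap E D) =
        ∑ i ∈ f.support, C (algebraMap E D (f.coeff i)) * (X ^ i - C r ^ i) := by
      simp only [mul_sub, Finset.sum_sub_distrib, h0, sub_zero]
      conv_lhs => rw [f.as_sum_support_C_mul_X_pow]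
      simp [Polynomial.map_sum]
    rw [h2]
    refine Finset.dvd_sum fun i _ => ?_
    obtain ⟨w, hw⟩ := (commute_X (C r)).sub_dvd_pow_sub_pow i
    refine ⟨C (algebraMap E D (f.coeff i)) * w, ?_⟩
    rw [hw, ← mul_assoc, ← mul_assoc]
    congr 1
    simp only [mul_sub, sub_mul, ← C_mul, hcomm, X_mul_C]
  obtain ⟨w, hw⟩ := hdvd
  refine ⟨w * C b⁻¹, f, minpoly.coeff_zero_ne_zero hri hr, ?_⟩
  have h1 : (1 + C b * X : D[X]) = C b * (X - C r) := by
    rw [mul_sub, ← C_mul, hrdef, mul_neg, mul_inv_cancel₀ hb]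
    simp [add_comm]
  have h2 : C b * f.map (algebraMap E D) = f.map (algebraMap E D) * C b := by
    ext i; simp [hcomm]
  rw [h1, mul_assoc, ← mul_assoc (X - C r), ← hw, ← mul_assoc, h2, mul_assoc, ← C_mul,
    mul_inv_cancel₀ hb, C_1, mul_one]

/-- The terms of degree at most one in `P ^ (n + 1)`, when the constant term of `P` is central. -/
theorem coeff_one_pow_of_central {E D : Type*} [Field E] [Ring D] [Algebra E D] (P : D[X]) (α : E)
    (h : P.coeff 0 = algebraMap E D α) (n : ℕ) :
    (P ^ (n + 1)).coeff 0 = algebraMap E D (α ^ (n + 1)) ∧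
      (P ^ (n + 1)).coeff 1 = algebraMap E D ((n + 1 : ℕ) * α ^ n) * P.coeff 1 := by
  induction n with
  | zero => simp [h]
  | succ n ih =>
    obtain ⟨h0, h1⟩ := ih
    constructor
    · rw [pow_succ, mul_coeff_zero, h0, h, ← map_mul, ← pow_succ]
    · rw [pow_succ, mul_coeff_one, h0, h1, h, mul_assoc, ← Algebra.commutes α, ← mul_assoc,
        ← map_mul, ← add_mul, ← map_add]
      congr 2
      push_cast
      ring

/-- If `(1 + t b) a (1 + t b)⁻¹ a⁻¹` is killed by a fixed exponent for all `t` in an infinite central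
field, then `a` and `b` commute: after clearing denominators this is an identity of polynomials in
`t`, whose terms of degree one say that `a b a⁻¹ = b`. -/
theorem commute_of_commutator_pow_eq_one {E D : Type*} [Field E] [Infinite E] [DivisionRing D]
    [Algebra E D] {a b : D} (ha : a ≠ 0) (hint : IsIntegral E b) {e : ℕ} (he : (e : E) ≠ 0)
    (h : ∀ t : E, 1 + algebraMap E D t * b ≠ 0 →
      ((1 + algebraMap E D t * b) * a * (1 + algebraMap E D t * b)⁻¹ * a⁻¹) ^ e = 1) :
    a * b = b * a := by
  rcases eq_or_ne b 0 with rfl | hb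
  · simp
  obtain ⟨q, f, hf0, hq⟩ := exists_one_add_mul_eq_map hb hint
  obtain ⟨n, rfl⟩ : ∃ n, e = n + 1 := Nat.exists_eq_succ_of_ne_zero (by rintro rfl; simp at he)
  let P : D[X] := (1 + C b * X) * C a * q * C a⁻¹
  have hP : P ^ (n + 1) = f.map (algebraMap E D) ^ (n + 1) := by
    -- both sides agree at every `t : E`, also where `1 + t b` vanishes, since then so does `f(t)`
    rw [← sub_eq_zero]
    refine eq_zero_of_forall_eval_eq_zero (E := E) _ fun t => ?_
    let ev : D[X] →+* D := eval₂RingHom' (RingHom.id D) (algebraMap E D t)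
      fun x => (Algebra.commutes t x).symm
    change ev _ = 0
    have hX : ev X = algebraMap E D t := eval₂_X _ _
    have hC : ∀ x, ev (C x) = x := fun x => eval₂_C _ _
    have h1 : ev (1 + C b * X) = 1 + algebraMap E D t * b := by
      simp [hX, hC, Algebra.commutes]
    have h2 : ev (f.map (algebraMap E D)) = algebraMap E D (f.eval t) := by
      change eval₂ _ _ _ = _
      rw [eval₂_map, RingHom.id_comp, eval₂_at_apply]
    have h3 : (1 + algebraMap E D t * b) * ev q = algebraMap E D (f.eval t) := by
      rw [← h1, ← map_mul, hq, h2]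
    rw [map_sub, map_pow, map_pow, h2]
    simp only [P, map_mul, hC, h1]
    by_cases hu : 1 + algebraMap E D t * b = 0
    · rw [hu, zero_mul] at h3
      simp [hu, ← h3]
    · have h4 : ev q = (1 + algebraMap E D t * b)⁻¹ * algebraMap E D (f.eval t) := by
        rw [← h3, inv_mul_cancel_left₀ hu]
      rw [h4, ← mul_assoc, mul_assoc _ (algebraMap E D (f.eval t)), Algebra.commutes (f.eval t) a⁻¹, ← mul_assoc,
        (Algebra.commute_algebraMap_right (f.eval t) _).mul_pow, h t hu, one_mul, sub_self]
  have hq0 : q.coeff 0 = algebraMap E D (f.coeff 0) := by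
    simpa [mul_coeff_zero] using congrArg (coeff · 0) hq
  have hq1 : q.coeff 1 + b * algebraMap E D (f.coeff 0) = algebraMap E D (f.coeff 1) := by
    have := congrArg (coeff · 1) hq
    simpa [mul_coeff_one, hq0, coeff_one] using this
  have hP0 : P.coeff 0 = algebraMap E D (f.coeff 0) := by
    simp only [P, mul_coeff_zero, hq0]
    simp [← Algebra.commutes, ha]
  have hP1 : P.coeff 1 = a * q.coeff 1 * a⁻¹ + b * algebraMap E D (f.coeff 0) := by
    simp only [P, coeff_mul_C, mul_coeff_one, hq0]
    simp [add_mul, mul_assoc, ← Algebra.commutes, ha, coeff_one]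
  -- both constant terms are `f(0)`, so equality in degree one gives `P₁ = f₁`
  have h5 := congrArg (coeff · 1) hP
  simp only [(coeff_one_pow_of_central P _ hP0 n).2, (coeff_one_pow_of_central
    (f.map (algebraMap E D)) (f.coeff 0) (by simp) n).2] at h5
  have h6 := mul_left_cancel₀ ((_root_.map_ne_zero _).2 (mul_ne_zero he (pow_ne_zero _ hf0))) h5
  rw [coeff_map, hP1, ← hq1, ← eq_sub_iff_add_eq] at h6
  have h7 := eq_sub_of_add_eq hq1
  have h8 : a * q.coeff 1 = q.coeff 1 * a := by
    rw [add_sub_cancel_right] at h6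
    nth_rewrite 2 [← h6]
    rw [inv_mul_cancel_right₀ ha]
  rw [h7, mul_sub, sub_mul, Algebra.commutes, sub_right_inj, ← mul_assoc, mul_assoc b,
    Algebra.commutes, ← mul_assoc] at h8
  exact mul_right_cancel₀ (by simpa using hf0) h8

end

/-! ### Normal subgroups radical over the center -/

/-- A normal subgroup that is radical over a central subfield over which `D` is
finite-dimensional is central. -/
theorem commute_of_radical_over_center {k F D : Type*} [Field k] [Field F] [DivisionRing D]
    [Algebra k F] [Algebra F D] [Module.Finite F D] (hk : BoundedRootsOfUnity k)
    (N : Subgroup Dˣ) [hN : N.Normal]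
    (hrad : ∀ a ∈ N, ∃ n : ℕ, 0 < n ∧ (a : D) ^ n ∈ (algebraMap F D).range)
    (a : Dˣ) (haN : a ∈ N) (b : D) : (a : D) * b = b * a := by
  obtain ⟨E, hEalg, hEcl⟩ := exists_purely_transcendental k F
  let A := Algebra.adjoin E ({(a : D), b} : Set D)
  have hAfin : FiniteDimensional E A := finite_adjoin (F := F) _ (by simp)
  have haA : (a : D) ∈ A := Algebra.subset_adjoin (by simp)
  have hbA : b ∈ A := Algebra.subset_adjoin (by simp)
  rcases finite_or_infinite E with hfin | hinf
  · have : Finite A := Module.finite_of_finite E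
    exact congrArg Subtype.val
      ((Finite.isDomain_to_isField A).mul_comm ⟨(a : D), haA⟩ ⟨b, hbA⟩)
  have hint : ∀ x ∈ A, IsIntegral E x := fun x hx =>
    (isIntegral_algHom_iff A.val Subtype.val_injective).mpr
      (Algebra.IsIntegral.isIntegral (⟨x, hx⟩ : A))
  obtain ⟨e, he0, he⟩ := hk (Module.finrank E A)
  refine commute_of_commutator_pow_eq_one (E := E) (e := e) a.ne_zero (hint b hbA) ?_ ?_
  · rw [← map_natCast (algebraMap k E)]
    exact (map_ne_zero _).2 he0
  intro t ht
  have huA : 1 + algebraMap E D t * b ∈ A :=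
    add_mem (one_mem _) (mul_mem (A.algebraMap_mem t) hbA)
  obtain ⟨u, hu⟩ : ∃ u : Dˣ, (u : D) = 1 + algebraMap E D t * b := ⟨Units.mk0 _ ht, rfl⟩
  rw [← hu] at huA ⊢
  set z : Dˣ := u * a * u⁻¹ * a⁻¹ with hz
  have hzc : (z : D) = u * a * (u : D)⁻¹ * (a : D)⁻¹ := by simp [hz]
  rw [← hzc]
  have hzN : z ∈ N := N.mul_mem (hN.conj_mem a haN u) (N.inv_mem haN)
  have hzA : (z : D) ∈ A := by
    rw [hzc]
    exact mul_mem (mul_mem (mul_mem huA haA) ((hint _ huA).inv_mem huA)) ((hint _ haA).inv_mem haA)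
  obtain ⟨n, hn, c, hc⟩ := hrad z hzN
  -- a commutator has norm one, so the scalar `c = zⁿ` satisfies `c ^ [D : F] = 1`
  have hnorm : Algebra.norm F (z : D) = 1 := by
    have h1 : ∀ v : Dˣ, Algebra.norm F (v : D) * Algebra.norm F ((v⁻¹ : Dˣ) : D) = 1 := fun v => by
      rw [← map_mul, Units.mul_inv, map_one]
    rw [hz, Units.val_mul, Units.val_mul, Units.val_mul, map_mul, map_mul, map_mul]
    linear_combination Algebra.norm F (a : D) * Algebra.norm F ((a⁻¹ : Dˣ) : D) * h1 u + h1 a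
  have hcpow : c ^ Module.finrank F D = 1 := by
    rw [← Algebra.norm_algebraMap (S := D), hc, map_pow, hnorm, one_pow]
  have htors : (z : D) ^ (n * Module.finrank F D) = 1 := by
    rw [pow_mul, ← hc, ← map_pow, hcpow, map_one]
  refine pow_eq_one_of_natDegree_minpoly_le hEcl he (hint _ hzA) ?_
    (Nat.mul_pos hn Module.finrank_pos) htors
  have h2 := minpoly.natDegree_le (A := E) (⟨z, hzA⟩ : A)
  rwa [← minpoly.algHom_eq A.val Subtype.val_injective] at h2

/-! ### Normal subgroups radical over a proper division subring -/

/-- The key step towards centrality: comparing conjugation by `t` and by `t + 1`, for `t` outside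
`K`. -/
theorem exists_pow_commute_s8 {D : Type*} [DivisionRing D] (K : Subring D)
    (hKdiv : ∀ x ∈ K, x⁻¹ ∈ K) (N : Subgroup Dˣ) [hN : N.Normal]
    (hrad : ∀ a ∈ N, ∃ n : ℕ, 0 < n ∧ ((a : Dˣ) : D) ^ n ∈ K)
    (a : Dˣ) (haN : a ∈ N) (haK : (a : D) ∈ K) (t : D) (ht : t ∉ K) :
    ∃ n : ℕ, 0 < n ∧ Commute ((a : D) ^ n) t := by
  have ht0 : t ≠ 0 := fun h => ht (h ▸ K.zero_mem)
  have ht1 : t + 1 ≠ 0 := fun h => ht (by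
    rw [eq_neg_of_add_eq_zero_left h]; exact K.neg_mem K.one_mem)
  have conj : ∀ u : D, u ≠ 0 → ∃ n : ℕ, 0 < n ∧ u * (a : D) ^ n * u⁻¹ ∈ K := fun u hu => by
    obtain ⟨n, hn, h⟩ := hrad _ (hN.conj_mem a haN (Units.mk0 u hu))
    refine ⟨n, hn, ?_⟩
    rw [← Units.val_pow_eq_pow_val, conj_pow] at h
    simpa using h
  obtain ⟨n, hn, hc⟩ := conj t ht0
  obtain ⟨m, hm, hd⟩ := conj (t + 1) ht1
  have pw : ∀ (u : D), u ≠ 0 → ∀ i j : ℕ, (u * (a : D) ^ i * u⁻¹) ^ j = u * (a : D) ^ (i * j) * u⁻¹ :=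
    fun u hu i j => by
      induction j with
      | zero => simp [hu]
      | succ j ih =>
        rw [pow_succ, ih, Nat.mul_succ, pow_add]
        simp only [mul_assoc, inv_mul_cancel_left₀ hu]
  have hc' := pw t ht0 n m ▸ K.pow_mem hc m
  have hd' := pw (t + 1) ht1 m n ▸ K.pow_mem hd n
  rw [mul_comm m n] at hd'
  refine ⟨n * m, Nat.mul_pos hn hm, ?_⟩
  set x := (a : D) ^ (n * m) with hx
  have hxK : x ∈ K := K.pow_mem haK _
  set c := t * x * t⁻¹ with hcdef
  set d := (t + 1) * x * (t + 1)⁻¹ with hddef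
  have hct : c * t = t * x := inv_mul_cancel_right₀ ht0 _
  have hdt : d * (t + 1) = (t + 1) * x := inv_mul_cancel_right₀ ht1 _
  have hrel : (d - c) * t = x - d := by
    rw [mul_add, add_mul, one_mul, mul_one, ← hct] at hdt
    rw [sub_mul, sub_eq_sub_iff_add_eq_add, hdt, add_comm]
  by_cases hdc : d - c = 0
  · rw [hdc, zero_mul] at hrel
    have : x = c := by rw [sub_eq_zero.1 hrel.symm, sub_eq_zero.1 hdc]
    change x * t = t * x
    rw [← hct, ← this]
  · refine absurd ?_ ht
    rw [← inv_mul_cancel_left₀ hdc t, hrel]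
    exact K.mul_mem (hKdiv _ (K.sub_mem hd' hc')) (K.sub_mem hxK hd')

theorem exists_pow_mem_center {D : Type*} [DivisionRing D] [Module.Finite (Subring.center D) D]
    (K : Subring D) (hKdiv : ∀ x ∈ K, x⁻¹ ∈ K) (hKne : K ≠ ⊤) (N : Subgroup Dˣ) [hN : N.Normal]
    (hrad : ∀ a ∈ N, ∃ n : ℕ, 0 < n ∧ ((a : Dˣ) : D) ^ n ∈ K) (a : Dˣ) (haN : a ∈ N) :
    ∃ n : ℕ, 0 < n ∧ (a : D) ^ n ∈ Subring.center D := by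
  obtain ⟨s, hs⟩ : ∃ s, s ∉ K := by
    by_contra! h
    exact hKne (eq_top_iff.2 fun x _ => h x)
  obtain ⟨l, hl, hal⟩ := hrad a haN
  have hcomm : ∀ t : D, ∃ n : ℕ, 0 < n ∧ Commute ((a : D) ^ n) t := by
    have h1 : ∀ t ∉ K, ∃ n : ℕ, 0 < n ∧ Commute ((a : D) ^ n) t := fun t ht => by
      obtain ⟨n, hn, h⟩ := exists_pow_commute_s8 K hKdiv N hrad (a ^ l) (N.pow_mem haN l)
        (by simpa using hal) t ht
      exact ⟨l * n, Nat.mul_pos hl hn, by simpa [pow_mul] using h⟩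
    intro t
    by_cases ht : t ∈ K
    · obtain ⟨n, hn, h⟩ := h1 s hs
      obtain ⟨m, hm, h'⟩ := h1 (s + t) fun h => hs (by simpa using K.sub_mem h ht)
      refine ⟨n * m, Nat.mul_pos hn hm, ?_⟩
      have e1 : Commute ((a : D) ^ (n * m)) s := by rw [pow_mul]; exact h.pow_left m
      have e2 : Commute ((a : D) ^ (n * m)) (s + t) := by
        rw [mul_comm, pow_mul]; exact h'.pow_left n
      simpa using e2.sub_right e1
    · exact h1 t ht
  obtain ⟨S, hS⟩ := Module.Finite.fg_top (R := Subring.center D) (M := D)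
  choose n hn hc using hcomm
  refine ⟨∏ t ∈ S, n t, Finset.prod_pos fun t _ => hn t, ?_⟩
  rw [Subring.mem_center_iff]
  intro x
  have hx : x ∈ Submodule.span (Subring.center D) (S : Set D) := hS ▸ Submodule.mem_top
  induction hx using Submodule.span_induction with
  | mem t ht =>
    obtain ⟨j, hj⟩ := Finset.dvd_prod_of_mem n ht
    rw [hj, pow_mul]
    exact ((hc t).pow_left j).symm
  | zero => simp
  | add x y _ _ h1 h2 => rw [add_mul, mul_add, h1, h2]
  | smul r x _ h => rw [smul_mul_assoc, mul_smul_comm, h]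


/-- Let `D` be a centrally finite division ring with center `F`, `K` a proper division
subring of `D`, and `N` a normal subgroup of `D^*`. If every element of `N` has some
positive power lying in `K`, then `N ⊆ F`. -/
theorem stmt_8 (D : Type*) [DivisionRing D]
    [Module.Finite (Subring.center D) D]
    (K : Subring D) (hKdiv : ∀ x ∈ K, x⁻¹ ∈ K) (hKne : K ≠ ⊤)
    (N : Subgroup Dˣ) [N.Normal]
    (hrad : ∀ a ∈ N, ∃ n : ℕ, 0 < n ∧ ((a : Dˣ) : D) ^ n ∈ K) :
    ∀ a ∈ N, ((a : Dˣ) : D) ∈ Subring.center D := by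
  intro a ha
  have hF : ∀ a ∈ N, ∃ n : ℕ, 0 < n ∧
      (a : D) ^ n ∈ (algebraMap (Subring.center D) D).range := fun a ha => by
    obtain ⟨n, hn, h⟩ := exists_pow_mem_center K hKdiv hKne N hrad a ha
    exact ⟨n, hn, ⟨_, h⟩, rfl⟩
  rw [Subring.mem_center_iff]
  intro b
  obtain ⟨p, hp⟩ := CharP.exists (Subring.center D)
  rcases CharP.char_is_prime_or_zero (Subring.center D) p with hprime | rfl
  · have := Fact.mk hprime
    let := ZMod.algebra (Subring.center D) p
    exact (commute_of_radical_over_center (boundedRootsOfUnity_zmod p) N hF a ha b).symm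
  · have := CharP.charP_to_charZero (Subring.center D)
    exact (commute_of_radical_over_center boundedRootsOfUnity_rat N hF a ha b).symm
end
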